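/- Let G be a gonality-tight graph with a vertex v such that removing v leaves the disjoint union of two (possibly disconnected or empty) subgraphs G' and G''. Suppose that for some integer k ≥ 1 the divisor D_2 = (k+1)·v + Σ_{w∈V(G')} w is v-reduced and realises the second gonality of G. Let N_{G'}(v) denote the set of neighbours of v in G'. Then: (1) there are exactly k+1 edges between v and each vertex of N_{G'}(v); (2) there is precisely one edge between every pair of distinct vertices of N_{G'}(v); (3) if V(G') ∖ N_{G'}(v) is nonempty, there is a unique vertex u ∈ N_{G'}(v) such that every path from a vertex of V(G') ∖ N_{G'}(v) to v passes through u; (4) setting n = |N_{G'}(v)|, the u-reduced divisor linearly equivalent to D_2 is (k+n+1)·u + Σ_{w∈V(G')∖N_{G'}(v)} w. -/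

import Mathlib

open Finset

variable {V : Type*} [Fintype V] [DecidableEq V]

/-- A finite loopless multigraph on vertex type `V`, given by symmetric edge multiplicities. -/
structure Multigraph (V : Type*) [Fintype V] [DecidableEq V] where
  mult : V → V → ℕ
  symm : ∀ u v, mult u v = mult v u
  loopless : ∀ v, mult v v = 0

namespace Multigraph

def Adj (G : Multigraph V) (u v : V) : Prop := 0 < G.mult u v

/-- A graph is connected. -/
def Connected (G : Multigraph V) : Prop :=
  Nonempty V ∧ ∀ u v : V, Relation.ReflTransGen G.Adj u v

/-- Valence of a vertex. -/
def valence (G : Multigraph V) (v : V) : ℕ := ∑ u, G.mult v u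

/-- The Laplacian applied to an integer-valued function on the vertices. -/
def laplacian (G : Multigraph V) (f : V → ℤ) : V → ℤ :=
  fun w => ∑ u, (G.mult w u : ℤ) * (f w - f u)

/-- Degree of a divisor. -/
def degree (D : V → ℤ) : ℤ := ∑ v, D v

/-- A divisor is effective if all coefficients are nonnegative. -/
def Effective (D : V → ℤ) : Prop := ∀ v, 0 ≤ D v

/-- Linear equivalence of divisors: they differ by a sequence of chip-firing moves,
equivalently by a Laplacian of an integer function. -/
def LinEquiv (G : Multigraph V) (D D' : V → ℤ) : Prop :=
  ∃ f : V → ℤ, D' = D - G.laplacian f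

/-- A divisor is winnable if it is linearly equivalent to an effective divisor. -/
def Winnable (G : Multigraph V) (D : V → ℤ) : Prop :=
  ∃ E : V → ℤ, Effective E ∧ G.LinEquiv D E

/-- The Baker–Norine rank of a divisor: the largest `r` such that `D - E` is winnable for
every effective divisor `E` of degree `r` (the defining set contains all negative integers,
and its supremum is `-1` precisely when `D` itself is not winnable). -/
noncomputable def rank (G : Multigraph V) (D : V → ℤ) : ℤ :=
  sSup {r : ℤ | ∀ E : V → ℤ, Effective E → degree E = r → G.Winnable (fun w => D w - E w)}

/-- The `k`-th gonality of a graph: the smallest degree of a divisor of rank `k`. -/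
noncomputable def gonality (G : Multigraph V) (k : ℤ) : ℤ :=
  sInf {d : ℤ | ∃ D : V → ℤ, G.rank D = k ∧ degree D = d}

/-- A graph is gonality-tight if its second gonality exceeds its first by exactly 1. -/
def GonalityTight (G : Multigraph V) : Prop :=
  G.gonality 2 = G.gonality 1 + 1

/-- A divisor realises the `k`-th gonality if it has rank `k` and degree `gon_k(G)`. -/
def Realises (G : Multigraph V) (k : ℤ) (D : V → ℤ) : Prop :=
  G.rank D = k ∧ degree D = G.gonality k

/-- A divisor is `v`-reduced: nonnegative away from `v`, and set-firing any nonempty set of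
vertices not containing `v` creates a negative coefficient inside the set. -/
def Reduced (G : Multigraph V) (v : V) (D : V → ℤ) : Prop :=
  (∀ w, w ≠ v → 0 ≤ D w) ∧
    ∀ U : Finset V, U.Nonempty → v ∉ U →
      ∃ w ∈ U, D w - ∑ u ∈ Uᶜ, (G.mult w u : ℤ) < 0

/-- The genus (first Betti number) of a graph: `|E| - |V| + 1`. -/
def genus (G : Multigraph V) : ℤ :=
  ((∑ u, ∑ v, G.mult u v : ℕ) : ℤ) / 2 - Fintype.card V + 1

/-- The canonical divisor of a graph. -/
def canonical (G : Multigraph V) : V → ℤ :=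
  fun w => (G.valence w : ℤ) - 2

/-- The subgraph induced on a set `S` of vertices (with all edges among `S`). -/
def induce (G : Multigraph V) (S : Finset V) : Multigraph {x // x ∈ S} where
  mult a b := G.mult a b
  symm a b := G.symm a b
  loopless a := G.loopless a

/-- `G.SeparatedBy u w v` means every path from `w` to `v` passes through `u`. -/
def SeparatedBy (G : Multigraph V) (u w v : V) : Prop :=
  ¬ Relation.ReflTransGen (fun x y => G.Adj x y ∧ x ≠ u ∧ y ≠ u) w v

end Multigraph

/-- Size of the `i`-th level of a quasi-banana graph: level `0` has a single vertex. -/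
def qbSize (q : ℕ → ℕ) (i : ℕ) : ℕ := if i = 0 then 1 else q i

/-- `ℓ` is a quasi-banana labelling of `G` exhibiting `G ≅ QB_m(q_1, …, q_m)`:
`ℓ` is a bijection onto the pairs `(i, j)` with `i ≤ m`, `1 ≤ j ≤ qbSize q i`
(vertex `u_{i,j}` is the vertex labelled `(i,j)`), and the edge multiplicities are:
one edge between distinct vertices of the same level, `(∑_{k=1}^{i} q_k) + 2` edges
between `u_{i,1}` and each `u_{i+1,j}`, and no other edges. -/
def Multigraph.IsQBLabelling (G : Multigraph V) (m : ℕ) (q : ℕ → ℕ) (ℓ : V → ℕ × ℕ) : Prop :=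
  (∀ i, 1 ≤ i → i ≤ m → 0 < q i) ∧
  Function.Injective ℓ ∧
  (∀ v : V, (ℓ v).1 ≤ m ∧ 1 ≤ (ℓ v).2 ∧ (ℓ v).2 ≤ qbSize q (ℓ v).1) ∧
  (∀ i j : ℕ, i ≤ m → 1 ≤ j → j ≤ qbSize q i → ∃ v, ℓ v = (i, j)) ∧
  (∀ v w : V, v ≠ w → G.mult v w =
    if (ℓ v).1 = (ℓ w).1 then 1
    else if (ℓ v).1 + 1 = (ℓ w).1 ∧ (ℓ v).2 = 1 then (∑ i ∈ Finset.Icc 1 (ℓ v).1, q i) + 2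
    else if (ℓ w).1 + 1 = (ℓ v).1 ∧ (ℓ w).2 = 1 then (∑ i ∈ Finset.Icc 1 (ℓ w).1, q i) + 2
    else 0)

/-- A graph is a quasi-banana graph if it is isomorphic to some `QB_m(N)`. -/
def Multigraph.IsQuasiBanana (G : Multigraph V) : Prop :=
  ∃ (m : ℕ) (q : ℕ → ℕ) (ℓ : V → ℕ × ℕ), G.IsQBLabelling m q ℓ

/-- The graph obtained from `G'` by attaching a complete graph `K_n`: `n` new vertices
pairwise joined by exactly one edge, each joined to `v` by exactly `k+1` edges. -/
def attachComplete (G' : Multigraph V) (v : V) (k n : ℕ) : Multigraph (V ⊕ Fin n) where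
  mult x y :=
    match x, y with
    | Sum.inl a, Sum.inl b => G'.mult a b
    | Sum.inl a, Sum.inr _ => if a = v then k + 1 else 0
    | Sum.inr _, Sum.inl b => if b = v then k + 1 else 0
    | Sum.inr i, Sum.inr j => if i = j then 0 else 1
  symm := by
    rintro (a | i) (b | j)
    · exact G'.symm a b
    · rfl
    · rfl
    · by_cases h : i = j
      · simp [h]
      · simp [h, Ne.symm h]
  loopless := by
    rintro (a | i)
    · exact G'.loopless a
    · simp

/-!
Write `D` for the divisor `(k + 1) v + ∑_{w ∈ A} w`. If every divisor `D - x - y - z` were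
winnable for fixed `x` and `y`, then `D - x - y` would have rank at least one, while its degree
`gon₂ - 2` is less than `gon₁` by tightness. For distinct `x, y` in `A ∪ {v}`, each `z ∉ {x, y}`
can be removed in addition to `x` and `y`; so `D` cannot be equivalent both to an effective
divisor dominating `2x + y` and to one dominating `x + 2y`.

As `D` has rank two, for each `w ∈ A` there is a script (a function whose Laplacian is added)
turning `D` into an effective divisor with two chips on `w`, and by reducedness it may be taken to
borrow on a set `W ⊆ A` only. Borrowing once on all of `W` puts two chips on each vertex of `W`
with a neighbour outside, so there is just one such vertex, the gate of `W`. That move must also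
empty `v`, whence the gate is joined to `v` by `k + 1` edges. Taking `w` in `N` gives the edges
between `v` and `N`; comparing the sets `W` of two vertices of `N` gives the edges inside `N`;
comparing the sets `W` of two vertices of `A \ N` shows that they have the same gate `u`. Finally,
borrowing once on `{u} ∪ (A \ N)` yields the `u`-reduced divisor.
-/

namespace Multigraph

variable {G : Multigraph V} {v : V} {D : V → ℤ}

/-! ### Laplacians, winnability and rank -/

lemma laplacian_le_laplacian {f g : V → ℤ} {w : V}
    (h : ∀ u, G.Adj w u → f w - f u ≤ g w - g u) : G.laplacian f w ≤ G.laplacian g w := by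
  refine sum_le_sum fun u _ => ?_
  rcases Nat.eq_zero_or_pos (G.mult w u) with h0 | hpos
  · simp [h0]
  · exact mul_le_mul_of_nonneg_left (h u hpos) (Int.natCast_nonneg _)

lemma laplacian_congr {f g : V → ℤ} {w : V}
    (h : ∀ u, G.Adj w u → f w - f u = g w - g u) : G.laplacian f w = G.laplacian g w :=
  le_antisymm (laplacian_le_laplacian fun u hu => (h u hu).le)
    (laplacian_le_laplacian fun u hu => (h u hu).ge)

@[simp]
lemma laplacian_zero (G : Multigraph V) : G.laplacian 0 = 0 := by
  ext w
  simp [laplacian]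

lemma laplacian_neg (G : Multigraph V) (f : V → ℤ) : G.laplacian (-f) = -G.laplacian f := by
  ext w
  simp only [laplacian, Pi.neg_apply, ← sum_neg_distrib]
  exact sum_congr rfl fun u _ => by ring

lemma laplacian_eq_zero_of_forall_adj {f : V → ℤ} {w : V} (hw : f w = 0)
    (h : ∀ u, G.Adj w u → f u = 0) : G.laplacian f w = 0 := by
  rw [laplacian_congr (g := 0) fun u hu => by simp [hw, h u hu], laplacian_zero, Pi.zero_apply]

lemma degree_laplacian (G : Multigraph V) (f : V → ℤ) : degree (G.laplacian f) = 0 := by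
  have antisymm : degree (G.laplacian f) = -degree (G.laplacian f) := by
    simp only [degree, laplacian]
    conv_lhs => rw [sum_comm]
    simp only [← sum_neg_distrib]
    refine sum_congr rfl fun w _ => sum_congr rfl fun u _ => ?_
    rw [G.symm u w]
    ring
  linarith

omit [DecidableEq V] in
lemma degree_add (D E : V → ℤ) : degree (D + E) = degree D + degree E :=
  sum_add_distrib

omit [DecidableEq V] in
lemma degree_sub (D E : V → ℤ) : degree (D - E) = degree D - degree E :=
  sum_sub_distrib _ _

@[simp]
lemma degree_single (x : V) (t : ℤ) : degree (Pi.single x t) = t := by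
  simp [degree]

omit [DecidableEq V] in
lemma Effective.degree_nonneg (h : Effective D) : 0 ≤ degree D :=
  sum_nonneg fun w _ => h w

omit [Fintype V] in
lemma effective_single (x : V) {t : ℤ} (ht : 0 ≤ t) : Effective (Pi.single x t : V → ℤ) :=
  fun w => (Pi.single_nonneg.2 ht : (0 : V → ℤ) ≤ Pi.single x t) w

omit [Fintype V] in
lemma single_two (x : V) : (Pi.single x 2 : V → ℤ) = Pi.single x 1 + Pi.single x 1 := by
  rw [← Pi.single_add, one_add_one_eq_two]

omit [Fintype V] in
lemma single_two_add_single_one_le {x y : V} (hD : Effective D) (hxy : x ≠ y) (hx : 2 ≤ D x)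
    (hy : 1 ≤ D y) : Pi.single x 2 + Pi.single y 1 ≤ D := fun w => by
  have := hD w
  simp only [Pi.add_apply, Pi.single_apply]
  grind

omit [Fintype V] in
lemma single_add_single_add_single_le {x y z : V} (hD : Effective D) (hxy : x ≠ y)
    (hzx : z ≠ x) (hzy : z ≠ y) (hx : 1 ≤ D x) (hy : 1 ≤ D y) (hz : 1 ≤ D z) :
    Pi.single x 1 + Pi.single y 1 + Pi.single z 1 ≤ D := fun w => by
  have := hD w
  simp only [Pi.add_apply, Pi.single_apply]
  grind

lemma Effective.exists_eq_single (hD : Effective D) (hdeg : degree D = 1) :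
    ∃ x, D = Pi.single x 1 := by
  obtain ⟨x, -, hx⟩ := exists_lt_of_sum_lt (s := univ) (f := fun _ => 0) (g := D)
    (by rw [sum_const_zero]; exact zero_lt_one.trans_eq hdeg.symm)
  have rest_nonneg : Effective (D - Pi.single x 1) := fun w => by
    by_cases h : w = x
    · subst h
      simpa [Order.one_le_iff_pos] using hx
    · simpa [h] using hD w
  have rest_degree : degree (D - Pi.single x 1) = 0 := by
    rw [degree_sub, hdeg, degree_single, sub_self]
  have rest_zero := (sum_eq_zero_iff_of_nonneg fun w _ => rest_nonneg w).1 rest_degree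
  exact ⟨x, sub_eq_zero.1 <| funext fun w => rest_zero w (mem_univ w)⟩

omit [DecidableEq V] in
lemma eq_of_degree_eq {E : V → ℤ} {x : V} (hdeg : degree D = degree E)
    (h : ∀ w, w ≠ x → D w = E w) : D = E := by
  classical
  have diff : degree (D - E) = (D - E) x :=
    sum_eq_single x (fun w _ hwx => sub_eq_zero.2 (h w hwx)) (fun hx => (hx (mem_univ x)).elim)
  rw [degree_sub, hdeg, sub_self] at diff
  ext w
  rcases eq_or_ne w x with rfl | hwx
  · exact sub_eq_zero.1 diff.symm
  · exact h w hwx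

lemma linEquiv_add_laplacian (G : Multigraph V) (D c : V → ℤ) :
    G.LinEquiv D (D + G.laplacian c) :=
  ⟨-c, by rw [laplacian_neg, sub_neg_eq_add]⟩

lemma winnable_sub_iff {E : V → ℤ} :
    G.Winnable (D - E) ↔ ∃ c : V → ℤ, E ≤ D + G.laplacian c := by
  constructor
  · rintro ⟨E', hE', f, rfl⟩
    refine ⟨-f, fun w => ?_⟩
    have := hE' w
    simp only [laplacian_neg, Pi.sub_apply, Pi.add_apply, Pi.neg_apply] at this ⊢
    linarith
  · rintro ⟨c, hc⟩
    refine ⟨_, fun w => ?_, G.linEquiv_add_laplacian (D - E) c⟩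
    have := hc w
    simp only [Pi.sub_apply, Pi.add_apply] at this ⊢
    linarith

lemma Winnable.degree_nonneg (h : G.Winnable D) : 0 ≤ degree D := by
  obtain ⟨E, hE, f, rfl⟩ := h
  simpa [degree_sub, degree_laplacian] using hE.degree_nonneg

/-- `D` has rank at least `r`: the condition on `r` whose supremum is `G.rank D`. It holds
vacuously for negative `r`. -/
def HasRankAtLeast (G : Multigraph V) (D : V → ℤ) (r : ℤ) : Prop :=
  ∀ E : V → ℤ, Effective E → degree E = r → G.Winnable (D - E)

namespace HasRankAtLeast

variable {r : ℤ}

lemma sub (h : G.HasRankAtLeast D r) {E : V → ℤ} (hE : Effective E) :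
    G.HasRankAtLeast (D - E) (r - degree E) := fun F hF hdeg => by
  rw [sub_sub]
  exact h (E + F) (fun w => add_nonneg (hE w) (hF w)) (by rw [degree_add, hdeg]; ring)

variable [Nonempty V]

lemma le_degree (h : G.HasRankAtLeast D r) (hr : 0 ≤ r) : r ≤ degree D := by
  obtain ⟨x⟩ := ‹Nonempty V›
  simpa [degree_sub] using (h _ (effective_single x hr) (degree_single x r)).degree_nonneg

lemma bddAbove (G : Multigraph V) (D : V → ℤ) : BddAbove {r | G.HasRankAtLeast D r} := by
  refine ⟨max 0 (degree D), fun r hr => ?_⟩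
  rcases le_total 0 r with h | h
  · exact le_max_of_le_right (hr.le_degree h)
  · exact le_max_of_le_left h

lemma of_rank (G : Multigraph V) (D : V → ℤ) : G.HasRankAtLeast D (G.rank D) := by
  refine Int.csSup_mem ⟨-1, fun E hE hdeg => ?_⟩ (bddAbove G D)
  linarith [hE.degree_nonneg]

lemma le_rank (h : G.HasRankAtLeast D r) : r ≤ G.rank D :=
  le_csSup (bddAbove G D) h

/-- A divisor of least degree among those of rank at least `r` has rank exactly `r`, since
otherwise chips could be removed from it. -/
lemma gonality_le (h : G.HasRankAtLeast D r) (hr : 0 ≤ r) : G.gonality r ≤ degree D := by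
  set degrees := degree '' {D' | G.HasRankAtLeast D' r}
  have mem_degrees : degree D ∈ degrees := ⟨D, h, rfl⟩
  have bdd : BddBelow degrees :=
    ⟨r, Set.forall_mem_image.2 fun D' h' => h'.le_degree hr⟩
  obtain ⟨D₀, hD₀, hmin⟩ := Int.csInf_mem ⟨_, mem_degrees⟩ bdd
  have rank_eq : G.rank D₀ = r := by
    refine le_antisymm ?_ hD₀.le_rank
    by_contra! hlt
    obtain ⟨x⟩ := ‹Nonempty V›
    have fewer := (of_rank G D₀).sub (effective_single x (sub_nonneg.2 hlt.le))
    rw [degree_single, sub_sub_cancel] at fewer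
    have := csInf_le bdd ⟨_, fewer, rfl⟩
    rw [← hmin, degree_sub, degree_single] at this
    linarith
  calc G.gonality r ≤ degree D₀ := csInf_le
        ⟨r, by rintro _ ⟨D', rfl, rfl⟩; exact (of_rank G D').le_degree hr⟩ ⟨D₀, rank_eq, rfl⟩
    _ ≤ degree D := hmin ▸ csInf_le bdd mem_degrees

end HasRankAtLeast

lemma Realises.winnable_sub (h : G.Realises 2 D) (x y : V) :
    G.Winnable (D - (Pi.single x 1 + Pi.single y 1)) := by
  have : Nonempty V := ⟨x⟩
  refine HasRankAtLeast.of_rank G D _ (fun w => ?_) ?_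
  · exact add_nonneg (effective_single x zero_le_one w) (effective_single y zero_le_one w)
  · rw [h.1, degree_add, degree_single, degree_single]
    norm_num

lemma GonalityTight.exists_not_winnable_sub (hG : G.GonalityTight) (h : G.Realises 2 D)
    (x y : V) : ∃ z, ¬G.Winnable (D - (Pi.single x 1 + Pi.single y 1 + Pi.single z 1)) := by
  by_contra! hwin
  have : Nonempty V := ⟨x⟩
  have rank_one : G.HasRankAtLeast (D - (Pi.single x 1 + Pi.single y 1)) 1 := fun E hE hdeg => by
    obtain ⟨z, rfl⟩ := hE.exists_eq_single hdeg
    rw [sub_sub]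
    exact hwin z
  have := rank_one.gonality_le zero_le_one
  rw [degree_sub, degree_add, degree_single, degree_single, h.2, hG] at this
  linarith

/-! ### Set-firing, gates and reduced divisors -/

lemma Adj.symm {x y : V} (h : G.Adj x y) : G.Adj y x := by
  rwa [Adj, G.symm]

lemma Connected.exists_adj (hG : G.Connected) {S : Set V} {x y : V} (hx : x ∈ S) (hy : y ∉ S) :
    ∃ a ∈ S, ∃ b ∉ S, G.Adj a b := by
  by_contra! hclosed
  refine hy ?_
  clear hy
  induction hG.2 x y with
  | refl => exact hx
  | tail _ hab ih => exact by_contra fun hb => hclosed _ ih _ hb hab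

lemma laplacian_indicator_of_mem {W : Finset V} {w : V} (hw : w ∈ W) :
    G.laplacian ((W : Set V).indicator 1) w = ∑ u ∈ Wᶜ, (G.mult w u : ℤ) :=
  (sum_subset_zero_on_sdiff (subset_univ _) (fun u hu => by simp_all)
    (fun u hu => by simp_all)).symm

lemma laplacian_indicator_of_notMem {W : Finset V} {w : V} (hw : w ∉ W) :
    G.laplacian ((W : Set V).indicator 1) w = -∑ u ∈ W, (G.mult w u : ℤ) := by
  rw [← sum_neg_distrib]
  exact (sum_subset_zero_on_sdiff (subset_univ _) (fun u hu => by simp_all)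
    (fun u hu => by simp_all)).symm

lemma mult_le_laplacian_indicator {W : Finset V} {w x : V} (hw : w ∈ W) (hx : x ∉ W) :
    (G.mult w x : ℤ) ≤ G.laplacian ((W : Set V).indicator 1) w := by
  rw [laplacian_indicator_of_mem hw]
  exact single_le_sum (f := fun u => (G.mult w u : ℤ)) (fun _ _ => Int.natCast_nonneg _)
    (mem_compl.2 hx)

lemma mult_le_of_effective_add_laplacian_indicator {W : Finset V} {w x : V} (hw : w ∈ W)
    (hx : x ∉ W) (h : Effective (D + G.laplacian ((W : Set V).indicator 1))) :
    (G.mult x w : ℤ) ≤ D x := by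
  have hnonneg := h x
  rw [Pi.add_apply, laplacian_indicator_of_notMem hx] at hnonneg
  have := single_le_sum (f := fun u => (G.mult x u : ℤ)) (fun _ _ => Int.natCast_nonneg _) hw
  linarith

lemma Reduced.exists_lt_laplacian_indicator (h : G.Reduced v D) {U : Finset V}
    (hU : U.Nonempty) (hv : v ∉ U) :
    ∃ w ∈ U, D w < G.laplacian ((U : Set V).indicator 1) w := by
  obtain ⟨w, hw, hlt⟩ := h.2 U hU hv
  exact ⟨w, hw, by rw [laplacian_indicator_of_mem hw]; linarith⟩

lemma Reduced.apply_le_of_effective (hD : G.Reduced v D) {c : V → ℤ}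
    (hc : Effective (D + G.laplacian c)) (w : V) : c v ≤ c w := by
  obtain ⟨m, -, hm⟩ := exists_min_image univ c ⟨v, mem_univ v⟩
  by_contra! hlt
  set U : Finset V := {x | c x = c m} with hU
  have hvU : v ∉ U := by simpa [hU] using ((hm w (mem_univ w)).trans_lt hlt).ne'
  obtain ⟨x, hx, hDx⟩ := hD.exists_lt_laplacian_indicator ⟨m, by simp [hU]⟩ hvU
  have hxm : c x = c m := by simpa [hU] using hx
  have fire_U : G.laplacian c x ≤ G.laplacian (-(U : Set V).indicator 1) x := by
    refine laplacian_le_laplacian fun u _ => ?_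
    have := hm u (mem_univ u)
    by_cases hu : c u = c m
    · simp [hU, hu, hxm]
    · simp only [hU, Pi.neg_apply, Set.indicator_apply, coe_filter, mem_univ, true_and,
        Set.mem_ofPred_eq, hxm, hu, if_true, if_false, Pi.one_apply]
      omega
  have := hc x
  rw [laplacian_neg] at fire_U
  simp only [Pi.add_apply, Pi.neg_apply] at this fire_U
  linarith

lemma Effective.add_laplacian_indicator_support (hD : Effective D) {c : V → ℤ} (hc : 0 ≤ c)
    {W : Finset V} (hW : ∀ x, x ∈ W ↔ c x ≠ 0) (h : Effective (D + G.laplacian c)) :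
    Effective (D + G.laplacian ((W : Set V).indicator 1)) := fun w => by
  by_cases hw : w ∈ W
  · rw [Pi.add_apply, laplacian_indicator_of_mem hw]
    exact add_nonneg (hD w) (sum_nonneg fun _ _ => Int.natCast_nonneg _)
  · have le : G.laplacian c w ≤ G.laplacian ((W : Set V).indicator 1) w := by
      refine laplacian_le_laplacian fun u _ => ?_
      have hcw : c w = 0 := by simpa using (hW w).not.1 hw
      have hcu : 0 ≤ c u := hc u
      by_cases hu : u ∈ W
      · have := (hW u).1 hu
        simp only [Set.indicator_apply, mem_coe, hw, hu, if_true, if_false, Pi.one_apply]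
        omega
      · simp [hw, hu, hcw, hcu]
    exact (h w).trans (add_le_add_right le _)

/-- `a` is the gate of `W`: every edge leaving `W` starts at `a`. -/
def IsGate (G : Multigraph V) (W : Finset V) (a : V) : Prop :=
  a ∈ W ∧ ∀ w ∈ W, ∀ x ∉ W, G.Adj w x → w = a

namespace IsGate

variable {W W' : Finset V} {a a' u w x : V}

lemma mult_eq_zero (h : G.IsGate W a) (hw : w ∈ W) (hx : x ∉ W) (hwa : w ≠ a) :
    G.mult w x = 0 :=
  Nat.eq_zero_of_not_pos fun hwx => hwa (h.2 w hw x hx hwx)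

lemma insert_compl (h : G.IsGate (insert v W) v) : G.IsGate (insert v (insert v W)ᶜ) v := by
  refine ⟨mem_insert_self _ _, fun w hw x hx hwx => ?_⟩
  by_contra hwv
  have hxW : x ∈ insert v W := by simp_all
  exact hx (h.2 x hxW w (by simp_all) hwx.symm ▸ mem_insert_self _ _)

lemma laplacian_indicator_of_ne (h : G.IsGate W a) (hw : w ∈ W) (hwa : w ≠ a) :
    G.laplacian ((W : Set V).indicator 1) w = 0 := by
  rw [laplacian_indicator_of_mem hw]
  exact sum_eq_zero fun x hx => by rw [h.mult_eq_zero hw (mem_compl.1 hx) hwa, Nat.cast_zero]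

lemma laplacian_indicator_of_notMem (h : G.IsGate W a) (hx : x ∉ W) :
    G.laplacian ((W : Set V).indicator 1) x = -G.mult x a := by
  rw [Multigraph.laplacian_indicator_of_notMem hx, sum_eq_single_of_mem a h.1 fun w hw hwa => ?_]
  rw [G.symm, h.mult_eq_zero hw hx hwa, Nat.cast_zero]

lemma disjoint (hG : G.Connected) (h : G.IsGate W a) (h' : G.IsGate W' a') (ha : a ∉ W')
    (ha' : a' ∉ W) : Disjoint W W' := by
  refine disjoint_left.2 fun x hx hx' => ?_
  obtain ⟨p, ⟨hp, hp'⟩, q, hq, hpq⟩ :=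
    hG.exists_adj (S := {y | y ∈ W ∧ y ∈ W'}) ⟨hx, hx'⟩ (fun haWW' => ha haWW'.2)
  by_cases hqW : q ∈ W
  · exact ha' (h'.2 p hp' q (fun hqW' => hq ⟨hqW, hqW'⟩) hpq ▸ hp)
  · exact ha (h.2 p hp q hqW hpq ▸ hp')

lemma separatedBy (h : G.IsGate W a) (hw : w ∈ W) (hx : x ∉ W) : G.SeparatedBy a w x := by
  refine fun hpath => hx ?_
  clear hx
  induction hpath with
  | refl => exact hw
  | tail _ hpq ih => exact by_contra fun hq => hpq.2.1 (h.2 _ ih _ hq hpq.1)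

lemma not_separatedBy (hG : G.Connected) (h : G.IsGate W a) (hw : w ∈ W) (hu : u ∉ W)
    (hax : G.Adj a x) (hxu : x ≠ u) : ¬G.SeparatedBy u w x := by
  have ne_u : ∀ y ∈ W, y ≠ u := fun y hy hyu => hu (hyu ▸ hy)
  set R := Relation.ReflTransGen (fun y z => G.Adj y z ∧ y ≠ u ∧ z ≠ u) w
  suffices reach_gate : R a from not_not.2 (reach_gate.tail ⟨hax, ne_u a h.1, hxu⟩)
  by_contra not_reach
  obtain ⟨p, ⟨hp, hRp⟩, q, hq, hpq⟩ :=
    hG.exists_adj (S := {y | y ∈ W ∧ R y}) ⟨hw, .refl⟩ (fun huS => hu huS.1)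
  by_cases hqW : q ∈ W
  · exact hq ⟨hqW, hRp.tail ⟨hpq, ne_u p hp, ne_u q hqW⟩⟩
  · exact not_reach (h.2 p hp q hqW hpq ▸ hRp)

end IsGate

lemma SeparatedBy.not_adj {u w x y : V} (h : G.SeparatedBy u w y) (hwu : w ≠ u) (hxu : x ≠ u)
    (hyu : y ≠ u) (hxy : G.Adj x y) : ¬G.Adj w x := fun hwx =>
  h (.tail (.single ⟨hwx, hwu, hxu⟩) ⟨hxy, hxu, hyu⟩)

/-- Only the part of a borrowing script on one side `S` of the cut vertex `v` matters on that side,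
and dropping the rest can only add chips to `v`. -/
lemma Reduced.exists_script_supported (hD : G.Reduced v D) {S : Finset V} (hv : v ∉ S)
    (hS : G.IsGate (insert v S) v) {E : V → ℤ} (hE : Effective E)
    (hED : ∀ w ∉ insert v S, E w ≤ D w) (hwin : G.Winnable (D - E)) :
    ∃ c : V → ℤ, 0 ≤ c ∧ (∀ w ∉ S, c w = 0) ∧ E ≤ D + G.laplacian c := by
  obtain ⟨c₀, hc₀⟩ := winnable_sub_iff.1 hwin
  have min_v := hD.apply_le_of_effective fun w => (hE w).trans (hc₀ w)
  set c : V → ℤ := fun w => if w ∈ S then c₀ w - c₀ v else 0 with hc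
  refine ⟨c, fun w => ?_, fun w hw => if_neg hw, fun w => ?_⟩
  · have := min_v w
    simp only [hc, Pi.zero_apply]
    split_ifs <;> linarith
  by_cases hwS : w ∈ insert v S
  · refine (hc₀ w).trans (add_le_add_right (laplacian_le_laplacian fun u hwu => ?_) _)
    have := min_v u
    rcases mem_insert.1 hwS with rfl | hwS
    · by_cases hu : u ∈ S <;> simp [hc, hu, hv, this]
    · by_cases hu : u ∈ S
      · simp [hc, hu, hwS]
      · have huv : u = v := by
          by_contra huv
          exact hv (hS.2 w (mem_insert_of_mem hwS) u (by simp [hu, huv]) hwu ▸ hwS)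
        simp [hc, hwS, hv, huv]
  · have no_change : G.laplacian c w = 0 := by
      refine laplacian_eq_zero_of_forall_adj (if_neg fun h => hwS (mem_insert_of_mem h))
        fun u hwu => if_neg fun hu => ?_
      exact hv (hS.2 u (mem_insert_of_mem hu) w hwS hwu.symm ▸ hu)
    rw [Pi.add_apply, no_change, add_zero]
    exact hED w hwS

lemma Reduced.of_isGate (hG : G.Connected) (hD : G.Reduced v D) {P : Finset V} {u : V}
    (hP : G.IsGate P u) (hv : v ∉ P) {D' : V → ℤ} (hout : ∀ w ∉ P, D' w = 0)
    (hin : ∀ w ∈ P, w ≠ u → D' w = D w) : G.Reduced u D' := by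
  refine ⟨fun w hwu => ?_, fun U hU huU => ?_⟩
  · by_cases hw : w ∈ P
    · exact hin w hw hwu ▸ hD.1 w fun hwv => hv (hwv ▸ hw)
    · exact (hout w hw).ge
  by_contra! hlegal
  have hUP : U ⊆ P := fun w hwU => by
    by_contra hwP
    obtain ⟨p, ⟨hpU, hpP⟩, q, hq, hpq⟩ :=
      hG.exists_adj (S := {y | y ∈ U ∧ y ∉ P}) ⟨hwU, hwP⟩ (fun hu => huU hu.1)
    have hqU : q ∈ U := by
      by_contra hqU
      have := hlegal p hpU
      have := mult_le_laplacian_indicator (G := G) hpU hqU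
      rw [laplacian_indicator_of_mem hpU] at this
      have := hout p hpP
      have : 0 < G.mult p q := hpq
      omega
    have hqP : q ∈ P := by_contra fun hqP => hq ⟨hqU, hqP⟩
    exact huU (hP.2 q hqP p hpP hpq.symm ▸ hqU)
  obtain ⟨w, hwU, hlt⟩ := hD.2 U hU fun hvU => hv (hUP hvU)
  have := hlegal w hwU
  rw [hin w (hUP hwU) fun hwu => huU (hwu ▸ hwU)] at this
  linarith

/-! ### Gonality-tight graphs with a cut vertex -/

/-- A pocket of the divisor `D` at `w`: the support of a borrowing script turning `D` into an
effective divisor with at least two chips on `w`. -/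
def IsPocket (G : Multigraph V) (D : V → ℤ) (w : V) (W : Finset V) : Prop :=
  ∃ c : V → ℤ, 0 ≤ c ∧ (∀ x, x ∈ W ↔ c x ≠ 0) ∧ Pi.single w 2 ≤ D + G.laplacian c

namespace IsPocket

variable {w x : V} {W : Finset V}

lemma effective_add_laplacian_indicator (h : G.IsPocket D w W) (hD : Effective D) :
    Effective (D + G.laplacian ((W : Set V).indicator 1)) :=
  let ⟨_, hc, hW, hle⟩ := h
  hD.add_laplacian_indicator_support hc hW fun x => (effective_single w zero_le_two x).trans (hle x)

lemma mem (h : G.IsPocket D w W) (hw : D w ≤ 1) : w ∈ W := by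
  obtain ⟨c, hc, hW, hle⟩ := h
  by_contra hwW
  have hcw : c w = 0 := by simpa using (hW w).not.1 hwW
  have loses : G.laplacian c w ≤ G.laplacian 0 w :=
    laplacian_le_laplacian fun u _ => by simpa [hcw] using hc u
  have := hle w
  simp only [Pi.single_eq_same, Pi.add_apply, laplacian_zero, Pi.zero_apply] at this loses
  linarith

/-- The script does not change the chips on a vertex `x` that neither lies in the pocket nor is
adjacent to it. -/
lemma winnable_of_not_adj (h : G.IsPocket D w W) (hx : 1 ≤ D x) (hwx : w ≠ x) (hxW : x ∉ W)
    (hadj : ∀ u ∈ W, ¬G.Adj x u) : G.Winnable (D - (Pi.single w 2 + Pi.single x 1)) := by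
  obtain ⟨c, -, hW, hle⟩ := h
  have hc : ∀ u ∉ W, c u = 0 := fun u hu => by simpa using (hW u).not.1 hu
  refine winnable_sub_iff.2 ⟨c, fun y => ?_⟩
  by_cases hyx : y = x
  · subst hyx
    have unchanged : G.laplacian c y = 0 :=
      laplacian_eq_zero_of_forall_adj (hc y hxW) fun u hu => hc u fun huW => hadj u huW hu
    simpa [hwx.symm, unchanged] using hx
  · simpa [hyx] using hle y

end IsPocket

/-- The divisor `(k + 1) v + ∑_{w ∈ A} w`. -/
def cutDivisor (v : V) (A : Finset V) (k : ℤ) : V → ℤ :=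
  fun w => if w = v then k + 1 else if w ∈ A then 1 else 0

omit [Fintype V] in
lemma cutDivisor_self (v : V) (A : Finset V) (k : ℤ) : cutDivisor v A k v = k + 1 :=
  if_pos rfl

omit [Fintype V] in
lemma cutDivisor_of_notMem {A : Finset V} {w : V} (hwv : w ≠ v) (hw : w ∉ A) (k : ℤ) :
    cutDivisor v A k w = 0 := by
  simp [cutDivisor, hwv, hw]

omit [Fintype V] in
lemma cutDivisor_of_mem {A : Finset V} {w : V} (hwv : w ≠ v) (hw : w ∈ A) (k : ℤ) :
    cutDivisor v A k w = 1 := by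
  simp [cutDivisor, hwv, hw]

omit [Fintype V] in
lemma effective_cutDivisor (v : V) (A : Finset V) (k : ℕ) :
    Effective (cutDivisor v A k) := fun w => by
  unfold cutDivisor
  split_ifs <;> positivity

omit [Fintype V] in
lemma one_le_cutDivisor {A : Finset V} {x : V} (k : ℕ) (hx : x ∈ insert v A) :
    1 ≤ cutDivisor v A k x := by
  unfold cutDivisor
  split_ifs <;> simp_all

lemma degree_cutDivisor {A : Finset V} (hv : v ∉ A) (k : ℤ) :
    degree (cutDivisor v A k) = k + 1 + #A := by
  have split : cutDivisor v A k = Pi.single v (k + 1) + fun w => if w ∈ A then 1 else 0 := by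
    ext w
    by_cases hw : w = v
    · subst hw
      simp [cutDivisor, hv]
    · simp [cutDivisor, hw]
  rw [split, degree_add, degree_single]
  simp [degree]

/-- The neighbours of `v` in `A`. -/
def neighborsIn (G : Multigraph V) (v : V) (A : Finset V) : Finset V :=
  A.filter fun a => 0 < G.mult v a

lemma mem_neighborsIn {A : Finset V} {a : V} : a ∈ G.neighborsIn v A ↔ a ∈ A ∧ G.Adj v a :=
  mem_filter

/-- In a gonality-tight graph, `A` is one side of the cut vertex `v`, and the `v`-reduced divisor
`(k + 1) v + ∑_{w ∈ A} w` realises the second gonality. The other side of `v` is the complement of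
`insert v A`. -/
structure IsTightCut (G : Multigraph V) (v : V) (A : Finset V) (k : ℕ) : Prop where
  connected : G.Connected
  tight : G.GonalityTight
  notMem : v ∉ A
  isGate : G.IsGate (insert v A) v
  one_le : 1 ≤ k
  reduced : G.Reduced v (cutDivisor v A k)
  realises : G.Realises 2 (cutDivisor v A k)

/-- `W` is a pocket of `(k + 1) v + ∑_{w ∈ A} w` at `w`, contained in `A`, which is attached to `v`
by exactly `k + 1` edges, all of them at its gate `a`. -/
structure IsGatedPocket (G : Multigraph V) (v : V) (A : Finset V) (k : ℕ) (w : V) (W : Finset V)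
    (a : V) : Prop where
  isPocket : G.IsPocket (cutDivisor v A k) w W
  subset : W ⊆ A
  mem : w ∈ W
  isGate : G.IsGate W a
  mult_eq : G.mult v a = k + 1

lemma IsGatedPocket.gate_mem_neighborsIn {A W : Finset V} {k : ℕ} {w a : V}
    (h : G.IsGatedPocket v A k w W a) : a ∈ G.neighborsIn v A :=
  mem_neighborsIn.2 ⟨h.subset h.isGate.1, by rw [Adj, h.mult_eq]; omega⟩

namespace IsTightCut

variable {A W W' : Finset V} {k : ℕ} {a b u w x y z : V}

lemma ne (h : G.IsTightCut v A k) (ha : a ∈ A) : a ≠ v :=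
  fun hav => h.notMem (hav ▸ ha)

lemma cutDivisor_eq_one (h : G.IsTightCut v A k) (ha : a ∈ A) : cutDivisor v A k a = 1 :=
  cutDivisor_of_mem (h.ne ha) ha k

/-- For `z ∉ insert v A`, a script supported on the other side of `v` brings a chip to `z` while
keeping one on `v`; it does not affect `A`. -/
lemma winnable_sub_of_ne (h : G.IsTightCut v A k) (hx : x ∈ insert v A) (hy : y ∈ insert v A)
    (hxy : x ≠ y) (hzx : z ≠ x) (hzy : z ≠ y) : G.Winnable
      (cutDivisor v A k - (Pi.single x 1 + Pi.single y 1 + Pi.single z 1)) := by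
  have hD := effective_cutDivisor v A k
  by_cases hz : z ∈ insert v A
  · exact winnable_sub_iff.2 ⟨0, by
      simpa using single_add_single_add_single_le hD hxy hzx hzy (one_le_cutDivisor k hx)
        (one_le_cutDivisor k hy) (one_le_cutDivisor k hz)⟩
  have hzv : z ≠ v := fun hzv => hz (hzv ▸ mem_insert_self v A)
  have hE : Effective (Pi.single v 1 + Pi.single z 1 : V → ℤ) := fun w =>
    add_nonneg (effective_single v zero_le_one w) (effective_single z zero_le_one w)
  have hED : ∀ w ∉ insert v (insert v A)ᶜ,
      (Pi.single v 1 + Pi.single z 1 : V → ℤ) w ≤ cutDivisor v A k w := fun w hw => by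
    have hwz : w ≠ z := by rintro rfl; simp_all
    simpa [show w ≠ v by simp_all, hwz] using hD w
  obtain ⟨c, -, hcS, hle⟩ := h.reduced.exists_script_supported (by simp) h.isGate.insert_compl
    hE hED (h.realises.winnable_sub v z)
  have unchanged : ∀ w ∈ A, G.laplacian c w = 0 := fun w hw =>
    laplacian_eq_zero_of_forall_adj (hcS w (by simp [hw])) fun u hwu => hcS u fun hu =>
      h.ne hw (h.isGate.2 w (mem_insert_of_mem hw) u (mem_compl.1 hu) hwu)
  have one_le : ∀ w ∈ insert v A, 1 ≤ (cutDivisor v A k + G.laplacian c) w := fun w hw => by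
    rcases mem_insert.1 hw with rfl | hw
    · simpa [hzv.symm] using hle w
    · rw [Pi.add_apply, unchanged w hw, h.cutDivisor_eq_one hw, add_zero]
  refine winnable_sub_iff.2 ⟨c, single_add_single_add_single_le (fun w => (hE w).trans (hle w))
    hxy hzx hzy (one_le x hx) (one_le y hy) ?_⟩
  simpa [hzv] using hle z

/-- Otherwise removing `x` and `y` would leave a divisor of rank at least one, contradicting
tightness. -/
lemma not_winnable_and_winnable (h : G.IsTightCut v A k) (hx : x ∈ insert v A)
    (hy : y ∈ insert v A) (hxy : x ≠ y) :
    ¬(G.Winnable (cutDivisor v A k - (Pi.single x 2 + Pi.single y 1)) ∧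
      G.Winnable (cutDivisor v A k - (Pi.single y 2 + Pi.single x 1))) := by
  rintro ⟨hxxy, hyyx⟩
  obtain ⟨z, hz⟩ := h.tight.exists_not_winnable_sub h.realises x y
  rw [single_two] at hxxy hyyx
  by_cases hzx : z = x
  · subst hzx
    exact hz (by convert hxxy using 2; abel)
  by_cases hzy : z = y
  · subst hzy
    exact hz (by convert hyyx using 2; abel)
  exact hz (h.winnable_sub_of_ne hx hy hxy hzx hzy)

lemma not_winnable_sub (h : G.IsTightCut v A k) (ha : a ∈ A) :
    ¬G.Winnable (cutDivisor v A k - (Pi.single a 2 + Pi.single v 1)) := fun hwin => by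
  refine h.not_winnable_and_winnable (mem_insert_of_mem ha) (mem_insert_self v A) (h.ne ha)
    ⟨hwin, winnable_sub_iff.2 ⟨0, ?_⟩⟩
  rw [laplacian_zero, add_zero]
  have := h.one_le
  exact single_two_add_single_one_le (effective_cutDivisor v A k) (h.ne ha).symm
    (by rw [cutDivisor_self]; omega) (h.cutDivisor_eq_one ha).ge

lemma two_le_of_adj (h : G.IsTightCut v A k) (hWA : W ⊆ A) (ha : a ∈ W) (hx : x ∉ W)
    (hax : G.Adj a x) :
    2 ≤ (cutDivisor v A k + G.laplacian ((W : Set V).indicator 1)) a := by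
  have hle := mult_le_laplacian_indicator (G := G) ha hx
  have hpos : 0 < G.mult a x := hax
  rw [Pi.add_apply, h.cutDivisor_eq_one (hWA ha)]
  omega

lemma exists_isGate (h : G.IsTightCut v A k) (hWA : W ⊆ A) (hW : W.Nonempty)
    (hD : Effective (cutDivisor v A k + G.laplacian ((W : Set V).indicator 1))) :
    ∃ a, G.IsGate W a := by
  obtain ⟨w, hw⟩ := hW
  obtain ⟨a, ha, x, hx, hax⟩ := h.connected.exists_adj (S := W) (mem_coe.2 hw)
    (y := v) fun hv => h.notMem (hWA hv)
  refine ⟨a, ha, fun b hb y hy hby => ?_⟩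
  by_contra hba
  have ha2 := h.two_le_of_adj hWA ha hx hax
  have hb2 := h.two_le_of_adj hWA hb hy hby
  exact h.not_winnable_and_winnable (mem_insert_of_mem (hWA hb)) (mem_insert_of_mem (hWA ha)) hba
    ⟨winnable_sub_iff.2 ⟨_, single_two_add_single_one_le hD hba hb2 (by linarith)⟩,
      winnable_sub_iff.2 ⟨_, single_two_add_single_one_le hD (Ne.symm hba) ha2 (by linarith)⟩⟩

/-- Borrowing along `W` must use up all chips on `v`, for the gate gains at least one. -/
lemma mult_eq_of_isGate (h : G.IsTightCut v A k) (hWA : W ⊆ A) (ha : G.IsGate W a)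
    (hD : Effective (cutDivisor v A k + G.laplacian ((W : Set V).indicator 1))) :
    G.mult v a = k + 1 := by
  have hvW : v ∉ W := fun hv => h.notMem (hWA hv)
  obtain ⟨b, hb, x, hx, hbx⟩ := h.connected.exists_adj (S := W) (mem_coe.2 ha.1)
    (y := v) hvW
  have hba := ha.2 b hb x hx hbx
  subst hba
  have hlt : (cutDivisor v A k + G.laplacian ((W : Set V).indicator 1)) v < 1 := by
    by_contra! hv
    exact h.not_winnable_sub (hWA hb) <| winnable_sub_iff.2
      ⟨_, single_two_add_single_one_le hD (h.ne (hWA hb)) (h.two_le_of_adj hWA hb hx hbx) hv⟩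
  have := hD v
  rw [Pi.add_apply, ha.laplacian_indicator_of_notMem hvW, cutDivisor_self] at hlt this
  omega

lemma exists_isGatedPocket (h : G.IsTightCut v A k) (hw : w ∈ A) :
    ∃ W a, G.IsGatedPocket v A k w W a := by
  have hED : ∀ x ∉ insert v A, (Pi.single w 2 : V → ℤ) x ≤ cutDivisor v A k x := fun x hx => by
    have hxw : x ≠ w := fun hxw => hx (mem_insert_of_mem (hxw ▸ hw))
    simpa [hxw] using effective_cutDivisor v A k x
  obtain ⟨c, hc, hcA, hle⟩ := h.reduced.exists_script_supported h.notMem h.isGate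
    (effective_single w zero_le_two) hED (single_two w ▸ h.realises.winnable_sub w w)
  set W : Finset V := {x | c x ≠ 0} with hW
  have pocket : G.IsPocket (cutDivisor v A k) w W := ⟨c, hc, by simp [hW], hle⟩
  have hWA : W ⊆ A := fun x hx => by
    have hcx : c x ≠ 0 := by simpa [hW] using hx
    exact by_contra fun hxA => hcx (hcA x hxA)
  have hwW := pocket.mem (h.cutDivisor_eq_one hw).le
  have hD := pocket.effective_add_laplacian_indicator (effective_cutDivisor v A k)
  obtain ⟨a, ha⟩ := h.exists_isGate hWA ⟨w, hwW⟩ hD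
  exact ⟨W, a, pocket, hWA, hwW, ha, h.mult_eq_of_isGate hWA ha hD⟩

lemma eq_gate_of_mem (h : G.IsTightCut v A k) (hW : G.IsGatedPocket v A k w W a)
    (hb : b ∈ G.neighborsIn v A) (hbW : b ∈ W) : b = a :=
  hW.isGate.2 b hbW v (fun hv => h.notMem (hW.subset hv)) (mem_neighborsIn.1 hb).2.symm

lemma exists_isGatedPocket_self (h : G.IsTightCut v A k) (ha : a ∈ G.neighborsIn v A) :
    ∃ W, G.IsGatedPocket v A k a W a := by
  obtain ⟨W, a', hW⟩ := h.exists_isGatedPocket (mem_neighborsIn.1 ha).1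
  obtain rfl := h.eq_gate_of_mem hW ha hW.mem
  exact ⟨W, hW⟩

theorem mult_eq (h : G.IsTightCut v A k) (ha : a ∈ G.neighborsIn v A) : G.mult v a = k + 1 :=
  let ⟨_, hW⟩ := h.exists_isGatedPocket_self ha
  hW.mult_eq

lemma mult_le_one (h : G.IsTightCut v A k) (ha : a ∈ G.neighborsIn v A)
    (hb : b ∈ G.neighborsIn v A) (hab : a ≠ b) : G.mult a b ≤ 1 := by
  obtain ⟨W, hW⟩ := h.exists_isGatedPocket_self ha
  have hle := mult_le_of_effective_add_laplacian_indicator hW.mem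
    (fun hbW => hab (h.eq_gate_of_mem hW hb hbW).symm)
    (hW.isPocket.effective_add_laplacian_indicator (effective_cutDivisor v A k))
  rw [h.cutDivisor_eq_one (mem_neighborsIn.1 hb).1, G.symm] at hle
  exact_mod_cast hle

lemma winnable_sub_of_not_adj (h : G.IsTightCut v A k) (ha : a ∈ G.neighborsIn v A)
    (hb : b ∈ G.neighborsIn v A) (hab : a ≠ b) (hadj : ¬G.Adj b a) :
    G.Winnable (cutDivisor v A k - (Pi.single a 2 + Pi.single b 1)) := by
  obtain ⟨W, hW⟩ := h.exists_isGatedPocket_self ha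
  have hbW : b ∉ W := fun hbW => hab (h.eq_gate_of_mem hW hb hbW).symm
  exact hW.isPocket.winnable_of_not_adj (h.cutDivisor_eq_one (mem_neighborsIn.1 hb).1).ge hab hbW
    fun u hu hbu => hadj (hW.isGate.2 u hu b hbW hbu.symm ▸ hbu)

theorem mult_eq_one (h : G.IsTightCut v A k) (ha : a ∈ G.neighborsIn v A)
    (hb : b ∈ G.neighborsIn v A) (hab : a ≠ b) : G.mult a b = 1 := by
  refine (h.mult_le_one ha hb hab).antisymm (Nat.succ_le_of_lt (?_ : G.Adj a b))
  by_contra hadj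
  exact h.not_winnable_and_winnable (mem_insert_of_mem (mem_neighborsIn.1 ha).1)
    (mem_insert_of_mem (mem_neighborsIn.1 hb).1) hab
    ⟨h.winnable_sub_of_not_adj ha hb hab fun hba => hadj hba.symm,
      h.winnable_sub_of_not_adj hb ha hab.symm hadj⟩

lemma winnable_sub_of_disjoint (h : G.IsTightCut v A k) (hW : G.IsGatedPocket v A k w W a)
    (hW' : G.IsGatedPocket v A k x W' b) (hxb : x ≠ b) (hdisj : Disjoint W W') :
    G.Winnable (cutDivisor v A k - (Pi.single w 2 + Pi.single x 1)) := by
  have hxW : x ∉ W := disjoint_right.1 hdisj hW'.mem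
  exact hW.isPocket.winnable_of_not_adj (h.cutDivisor_eq_one (hW'.subset hW'.mem)).ge
    (fun hwx => hxW (hwx ▸ hW.mem)) hxW
    fun u hu hxu => hxb (hW'.isGate.2 x hW'.mem u (disjoint_left.1 hdisj hu) hxu)

lemma gate_eq_gate (h : G.IsTightCut v A k) (hW : G.IsGatedPocket v A k w W a)
    (hW' : G.IsGatedPocket v A k x W' b) (hw : w ∉ G.neighborsIn v A)
    (hx : x ∉ G.neighborsIn v A) : a = b := by
  by_contra hab
  have ha := hW.gate_mem_neighborsIn
  have hb := hW'.gate_mem_neighborsIn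
  have hdisj : Disjoint W W' := hW.isGate.disjoint h.connected hW'.isGate
    (fun haW' => hab (h.eq_gate_of_mem hW' ha haW'))
    (fun hbW => hab (h.eq_gate_of_mem hW hb hbW).symm)
  have hwx : w ≠ x := fun hwx => disjoint_left.1 hdisj hW.mem (hwx ▸ hW'.mem)
  exact h.not_winnable_and_winnable (mem_insert_of_mem (hW.subset hW.mem))
    (mem_insert_of_mem (hW'.subset hW'.mem)) hwx
    ⟨h.winnable_sub_of_disjoint hW hW' (fun hxb => hx (hxb ▸ hb)) hdisj,
      h.winnable_sub_of_disjoint hW' hW (fun hwa => hw (hwa ▸ ha)) hdisj.symm⟩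

theorem existsUnique_separatedBy (h : G.IsTightCut v A k)
    (hne : (A \ G.neighborsIn v A).Nonempty) :
    ∃! u, u ∈ G.neighborsIn v A ∧ ∀ w ∈ A \ G.neighborsIn v A, G.SeparatedBy u w v := by
  obtain ⟨w₀, hw₀⟩ := hne
  obtain ⟨hw₀A, hw₀N⟩ := mem_sdiff.1 hw₀
  obtain ⟨W₀, a, hW₀⟩ := h.exists_isGatedPocket hw₀A
  have ha := hW₀.gate_mem_neighborsIn
  refine ⟨a, ⟨ha, fun w hw => ?_⟩, fun u ⟨hu, hsep⟩ => ?_⟩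
  · obtain ⟨hwA, hwN⟩ := mem_sdiff.1 hw
    obtain ⟨W, b, hW⟩ := h.exists_isGatedPocket hwA
    obtain rfl := h.gate_eq_gate hW₀ hW hw₀N hwN
    exact hW.isGate.separatedBy hW.mem fun hv => h.notMem (hW.subset hv)
  · by_contra hua
    have hu₀ : u ∉ W₀ := fun hu₀ => hua (h.eq_gate_of_mem hW₀ hu hu₀)
    exact hW₀.isGate.not_separatedBy h.connected hW₀.mem hu₀ (mem_neighborsIn.1 ha).2.symm
      (h.ne (mem_neighborsIn.1 hu).1).symm (hsep w₀ hw₀)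

lemma isGate_insert_sdiff (h : G.IsTightCut v A k) (hu : u ∈ G.neighborsIn v A)
    (hsep : ∀ w ∈ A \ G.neighborsIn v A, G.SeparatedBy u w v) :
    G.IsGate (insert u (A \ G.neighborsIn v A)) u := by
  refine ⟨mem_insert_self _ _, fun w hw x hx hwx => (mem_insert.1 hw).resolve_right fun hwN => ?_⟩
  obtain ⟨hwA, hwnN⟩ := mem_sdiff.1 hwN
  have hxv : x ≠ v := fun hxv => hwnN (mem_neighborsIn.2 ⟨hwA, hxv ▸ hwx.symm⟩)
  have hxA : x ∈ A := by
    by_contra hxA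
    exact h.ne hwA (h.isGate.2 w (mem_insert_of_mem hwA) x (by simp [hxv, hxA]) hwx)
  obtain ⟨hxu, hxN⟩ : x ≠ u ∧ x ∈ G.neighborsIn v A := by simp_all
  exact (hsep w hwN).not_adj (fun hwu => hwnN (hwu ▸ hu)) hxu (h.ne (mem_neighborsIn.1 hu).1).symm
    (mem_neighborsIn.1 hxN).2.symm hwx

theorem reduced_cutDivisor (h : G.IsTightCut v A k) (hu : u ∈ G.neighborsIn v A)
    (hsep : ∀ w ∈ A \ G.neighborsIn v A, G.SeparatedBy u w v) (t : ℤ) :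
    G.Reduced u (cutDivisor u (A \ G.neighborsIn v A) t) := by
  refine h.reduced.of_isGate h.connected (h.isGate_insert_sdiff hu hsep) (fun hv => ?_)
    (fun w hw => ?_) fun w hw hwu => ?_
  · rcases mem_insert.1 hv with rfl | hv
    · exact h.notMem (mem_neighborsIn.1 hu).1
    · exact h.notMem (mem_sdiff.1 hv).1
  · obtain ⟨hwu, hwN⟩ := not_or.1 (mem_insert.not.1 hw)
    exact cutDivisor_of_notMem hwu hwN t
  · have hwN := mem_of_mem_insert_of_ne hw hwu
    rw [cutDivisor_of_mem hwu hwN, h.cutDivisor_eq_one (mem_sdiff.1 hwN).1]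

lemma cutDivisor_add_laplacian_indicator (h : G.IsTightCut v A k) (hu : u ∈ G.neighborsIn v A)
    (hsep : ∀ w ∈ A \ G.neighborsIn v A, G.SeparatedBy u w v) (hwu : w ≠ u) (t : ℤ) :
    (cutDivisor v A k + G.laplacian
      (((insert u (A \ G.neighborsIn v A) : Finset V) : Set V).indicator 1)) w =
      cutDivisor u (A \ G.neighborsIn v A) t w := by
  have gate := h.isGate_insert_sdiff hu hsep
  have huA := (mem_neighborsIn.1 hu).1
  by_cases hw : w ∈ A \ G.neighborsIn v A
  · rw [Pi.add_apply, gate.laplacian_indicator_of_ne (mem_insert_of_mem hw) hwu,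
      h.cutDivisor_eq_one (mem_sdiff.1 hw).1, cutDivisor_of_mem hwu hw, add_zero]
  rw [Pi.add_apply, gate.laplacian_indicator_of_notMem (by simp [hwu, hw]),
    cutDivisor_of_notMem hwu hw]
  by_cases hwv : w = v
  · subst hwv
    rw [cutDivisor_self, h.mult_eq hu]
    push_cast
    ring
  by_cases hwA : w ∈ A
  · have hwN : w ∈ G.neighborsIn v A := by_contra fun hwN => hw (mem_sdiff.2 ⟨hwA, hwN⟩)
    rw [h.cutDivisor_eq_one hwA, h.mult_eq_one hwN hu hwu, Nat.cast_one, add_neg_cancel]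
  · rw [cutDivisor_of_notMem hwv hwA, G.symm, h.isGate.mult_eq_zero (mem_insert_of_mem huA)
      (by simp [hwv, hwA]) (h.ne huA), Nat.cast_zero, neg_zero, add_zero]

theorem linEquiv_cutDivisor (h : G.IsTightCut v A k) (hu : u ∈ G.neighborsIn v A)
    (hsep : ∀ w ∈ A \ G.neighborsIn v A, G.SeparatedBy u w v) :
    G.LinEquiv (cutDivisor v A k)
      (cutDivisor u (A \ G.neighborsIn v A) (k + #(G.neighborsIn v A))) := by
  have hcard : #(A \ G.neighborsIn v A) + #(G.neighborsIn v A) = #A :=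
    card_sdiff_add_card_eq_card (filter_subset _ _)
  have hdeg : degree (cutDivisor v A k + G.laplacian
      (((insert u (A \ G.neighborsIn v A) : Finset V) : Set V).indicator 1)) =
      degree (cutDivisor u (A \ G.neighborsIn v A) (k + #(G.neighborsIn v A))) := by
    rw [degree_add, degree_laplacian, degree_cutDivisor h.notMem,
      degree_cutDivisor fun huN => (mem_sdiff.1 huN).2 hu, ← hcard]
    push_cast
    ring
  rw [← eq_of_degree_eq hdeg fun w hwu => h.cutDivisor_add_laplacian_indicator hu hsep hwu _]
  exact G.linEquiv_add_laplacian _ _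

end IsTightCut

end Multigraph

/-- The structure lemma for gonality-tight graphs: with `G` gonality-tight,
`v` a vertex whose removal leaves the disjoint union of `G'` (vertex set `A`) and `G''`
(vertex set `B`), and `D₂ = (k+1)·v + ∑_{w ∈ A} w` a `v`-reduced divisor realising the
second gonality, the four structural conclusions hold (`N` is the set of neighbours of `v`
in `G'`). -/
theorem stmt6 (G : Multigraph V) (hG : G.Connected) (hGT : G.GonalityTight)
    (v : V) (A B : Finset V)
    (hAB : A ∪ B = Finset.univ.erase v) (hdisj : Disjoint A B)
    (hnoedge : ∀ a ∈ A, ∀ b ∈ B, G.mult a b = 0)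
    (k : ℕ) (hk : 1 ≤ k)
    (D₂ : V → ℤ)
    (hD₂ : D₂ = fun w => if w = v then (k : ℤ) + 1 else if w ∈ A then 1 else 0)
    (hred : G.Reduced v D₂) (hreal : G.Realises 2 D₂)
    (N : Finset V) (hN : N = A.filter (fun a => 0 < G.mult v a)) :
    (∀ a ∈ N, G.mult v a = k + 1) ∧
    (∀ a ∈ N, ∀ b ∈ N, a ≠ b → G.mult a b = 1) ∧
    ((A \ N).Nonempty →
      ∃! u, u ∈ N ∧ ∀ w ∈ A \ N, G.SeparatedBy u w v) ∧
    (∀ u ∈ N, (∀ w ∈ A \ N, G.SeparatedBy u w v) →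
      G.Reduced u
        (fun w => if w = u then (k : ℤ) + N.card + 1 else if w ∈ A \ N then 1 else 0) ∧
      G.LinEquiv D₂
        (fun w => if w = u then (k : ℤ) + N.card + 1 else if w ∈ A \ N then 1 else 0)) := by
  subst hN hD₂
  have gate : G.IsGate (insert v A) v := by
    refine ⟨mem_insert_self v A, fun w hw x hx hwx => (mem_insert.1 hw).resolve_right fun hwA => ?_⟩
    have hxB : x ∈ A ∪ B := by simp_all
    exact hwx.ne' (hnoedge w hwA x ((mem_union.1 hxB).resolve_left (by simp_all)))
  have cut : G.IsTightCut v A k :=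
    ⟨hG, hGT, fun hv => notMem_erase v univ (hAB ▸ mem_union_left B hv), gate, hk, hred, hreal⟩
  exact ⟨fun _ => cut.mult_eq, fun _ ha _ hb => cut.mult_eq_one ha hb,
    cut.existsUnique_separatedBy, fun _ hu hsep =>
      ⟨cut.reduced_cutDivisor hu hsep _, cut.linEquiv_cutDivisor hu hsep⟩⟩
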